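/- Let (σ_j)_{j≥1} be a sequence of positive real numbers satisfying σ_j²/(β j) → 1 as j → ∞ for some constant β > 0, let ω_j = ω(σ_j), and let n_d(ε) be the average case approximation complexity built from (ω_j). Define a_d = Σ_{j=1}^d ( |ln ω_j| ω_j/(1−ω_j) + |ln(1−ω_j)| ) and b_d = (ln d)^{3/2}/√(3β). Then for every ε ∈ (0,1), (ln n_d(ε) − a_d)/b_d → Φ⁻¹(1 − ε²) as d → ∞, where Φ is the cumulative distribution function of the standard Gaussian law and Φ⁻¹(p) = inf{x ∈ ℝ : Φ(x) ≥ p}. -/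

import Mathlib

open Filter Set

/-- `ω(σ) = (1 + (σ²/2)(1 + √(1 + 4/σ²)))⁻¹`. -/
noncomputable def omegaFn (σ : ℝ) : ℝ :=
  (1 + σ ^ 2 / 2 * (1 + Real.sqrt (1 + 4 / σ ^ 2)))⁻¹

/-- The average case approximation complexity `n_d(ε)` built from the sequence `ω`:
the minimal number `n ≥ 1` such that some finite set `S` of multi-indices with `|S| ≤ n`
captures all but `ε²` of the total mass of the eigenvalues
`λ_d(k) = ∏_{j<d} (1 - ω_j) ω_j^{k_j}`, `k : Fin d → ℕ`. -/
noncomputable def avgComplexity (ω : ℕ → ℝ) (d : ℕ) (ε : ℝ) : ℕ :=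
  sInf {n : ℕ | 1 ≤ n ∧ ∃ S : Finset (Fin d → ℕ), S.card ≤ n ∧
    ∑' k : {k : Fin d → ℕ // k ∉ S}, ∏ j : Fin d, (1 - ω j.1) * ω j.1 ^ k.1 j ≤ ε ^ 2}

/-- The cumulative distribution function `Φ` of the standard Gaussian law. -/
noncomputable def stdGaussianCDF (x : ℝ) : ℝ :=
  ProbabilityTheory.cdf (ProbabilityTheory.gaussianReal 0 1) x

/-- The quantile `Φ⁻¹(p) = inf{x : Φ(x) ≥ p}` of the standard Gaussian law. -/
noncomputable def stdGaussianQuantile (p : ℝ) : ℝ :=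
  sInf {x : ℝ | p ≤ stdGaussianCDF x}

/-- `a_d = Σ_{j=1}^d ( |ln ω_j| ω_j/(1-ω_j) + |ln(1-ω_j)| )`. -/
noncomputable def aSeq (ω : ℕ → ℝ) (d : ℕ) : ℝ :=
  ∑ j ∈ Finset.range d, (|Real.log (ω j)| * ω j / (1 - ω j) + |Real.log (1 - ω j)|)

/-! Read the eigenvalues `λ_d(k)` as the point masses of a random multi-index with independent
geometric coordinates. Up to `o(b_d)`, the logarithm of the number of atoms needed to cover mass
`p` is the `p`-quantile of the surprisal `-log λ_d(k)`: each atom of surprisal at most `y` weighs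
at least `exp (-y)`, so there are at most `exp y` of them, while `n` atoms of larger surprisal
carry mass less than `n * exp (-y)`. The surprisal is `a_d`, the entropy, plus a sum of independent
centred variables, so Lyapunov's central limit theorem gives its quantiles once its variance is
`~ b_d ^ 2` and the third absolute moments add up to `o(b_d ^ 3)`. Both follow from
`ω_j ~ 1 / (β j)` and `-log ω_j ~ log j`, which make these sums grow like
`∑ log² j / (β j) ~ log³ d / (3 β)` and `∑ log³ j / (β j) ~ log⁴ d / (4 β)`. -/

open MeasureTheory ProbabilityTheory Asymptotics
open scoped Topology ENNReal

section CoveringCard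

variable {α : Type*} [MeasurableSpace α] {μ : Measure α} {p r : ℝ}

/-- The minimal cardinality of a finite set of `μ`-mass at least `p`; by convention it is `0` if no
finite set has mass at least `p`. -/
noncomputable def coveringCard (μ : Measure α) (p : ℝ) : ℕ :=
  sInf {n | ∃ S : Finset α, S.card ≤ n ∧ p ≤ μ.real S}

lemma coveringCard_le_card {S : Finset α} (hS : p ≤ μ.real S) : coveringCard μ p ≤ S.card :=
  Nat.sInf_le ⟨S, le_rfl, hS⟩

lemma exists_card_le_coveringCard (h : ∃ S : Finset α, p ≤ μ.real S) :
    ∃ S : Finset α, S.card ≤ coveringCard μ p ∧ p ≤ μ.real S :=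
  Nat.sInf_mem (s := {n | ∃ S : Finset α, S.card ≤ n ∧ p ≤ μ.real S})
    (h.elim fun S hS ↦ ⟨S.card, S, le_rfl, hS⟩)

lemma coveringCard_pos (hp : 0 < p) (h : ∃ S : Finset α, p ≤ μ.real S) :
    0 < coveringCard μ p := by
  obtain ⟨S, hcard, hS⟩ := exists_card_le_coveringCard h
  refine lt_of_lt_of_le (Finset.card_pos.2 (Finset.nonempty_iff_ne_empty.2 ?_)) hcard
  rintro rfl
  exact hS.not_gt (by simpa using hp)

variable [MeasurableSingletonClass α] [IsFiniteMeasure μ]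

lemma finite_setOf_le_measureReal_singleton (hr : 0 < r) : {k | r ≤ μ.real {k}}.Finite := by
  refine (Measure.finite_const_le_meas_of_disjoint_iUnion μ (ENNReal.ofReal_pos.2 hr)
    measurableSet_singleton (fun i j hij ↦ disjoint_singleton.2 hij) (measure_ne_top μ _)).subset
    fun k hk ↦ ?_
  exact (ENNReal.ofReal_le_iff_le_toReal (measure_ne_top μ _)).2 hk

lemma coveringCard_mul_le (hr : 0 < r) (hp : p ≤ μ.real {k | r ≤ μ.real {k}}) :
    coveringCard μ p * r ≤ μ.real univ := by
  obtain ⟨S, hS⟩ := (finite_setOf_le_measureReal_singleton (μ := μ) hr).exists_finset_coe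
  rw [← hS] at hp
  calc coveringCard μ p * r ≤ S.card * r := by
        gcongr
        exact coveringCard_le_card hp
    _ = S.card • r := (nsmul_eq_mul _ _).symm
    _ ≤ ∑ k ∈ S, μ.real {k} :=
        Finset.card_nsmul_le_sum _ _ _ fun k hk ↦ hS.subset hk
    _ = μ.real S := sum_measureReal_singleton S
    _ ≤ μ.real univ := measureReal_mono (subset_univ _)

lemma le_measureReal_add_coveringCard_mul (hr : 0 ≤ r) (h : ∃ S : Finset α, p ≤ μ.real S) :
    p ≤ μ.real {k | r ≤ μ.real {k}} + coveringCard μ p * r := by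
  classical
  obtain ⟨S, hcard, hS⟩ := exists_card_le_coveringCard h
  let L : Finset α := {k ∈ S | r ≤ μ.real {k}}
  let R : Finset α := {k ∈ S | ¬ r ≤ μ.real {k}}
  calc p ≤ ∑ k ∈ S, μ.real {k} := hS.trans_eq (sum_measureReal_singleton S).symm
    _ = ∑ k ∈ L, μ.real {k} + ∑ k ∈ R, μ.real {k} :=
        (Finset.sum_filter_add_sum_filter_not S _ _).symm
    _ ≤ μ.real L + R.card • r := by
        rw [sum_measureReal_singleton]
        gcongr
        exact Finset.sum_le_card_nsmul _ _ _ fun k hk ↦ (not_le.1 (Finset.mem_filter.1 hk).2).le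
    _ ≤ μ.real {k | r ≤ μ.real {k}} + coveringCard μ p * r := by
        rw [nsmul_eq_mul]
        gcongr
        · exact measure_ne_top μ _
        · exact fun k hk ↦ (Finset.mem_filter.1 hk).2
        · exact (Finset.card_filter_le S _).trans hcard

lemma exists_finset_le_measureReal (hr : 0 < r) (hp : p ≤ μ.real {k | r ≤ μ.real {k}}) :
    ∃ S : Finset α, p ≤ μ.real S := by
  obtain ⟨S, hS⟩ := (finite_setOf_le_measureReal_singleton (μ := μ) hr).exists_finset_coe
  exact ⟨S, hS ▸ hp⟩

lemma add_log_le_log_coveringCard {y η : ℝ} (hη : 0 < η) (h : ∃ S : Finset α, p ≤ μ.real S)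
    (hp : μ.real {k | Real.exp (-y) ≤ μ.real {k}} + η ≤ p) :
    y + Real.log η ≤ Real.log (coveringCard μ p) := by
  have hmul : η ≤ coveringCard μ p * Real.exp (-y) := by
    linarith [le_measureReal_add_coveringCard_mul (Real.exp_pos (-y)).le h]
  have hcard : (0 : ℝ) < coveringCard μ p :=
    pos_of_mul_pos_left (hη.trans_le hmul) (Real.exp_pos _).le
  calc y + Real.log η ≤ y + Real.log (coveringCard μ p * Real.exp (-y)) := by gcongr
    _ = Real.log (coveringCard μ p) := by
        rw [Real.log_mul hcard.ne' (Real.exp_ne_zero _), Real.log_exp]; ring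

lemma log_coveringCard_le [IsProbabilityMeasure μ] {y : ℝ} (hp₀ : 0 < p)
    (hp : p ≤ μ.real {k | Real.exp (-y) ≤ μ.real {k}}) :
    Real.log (coveringCard μ p) ≤ y := by
  have hr := Real.exp_pos (-y)
  have hcard : (0 : ℝ) < coveringCard μ p :=
    mod_cast coveringCard_pos hp₀ (exists_finset_le_measureReal hr hp)
  rw [Real.log_le_iff_le_exp hcard]
  calc (coveringCard μ p : ℝ) = coveringCard μ p * Real.exp (-y) * Real.exp y := by
        rw [mul_assoc, ← Real.exp_add]; simp
    _ ≤ 1 * Real.exp y := by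
        gcongr
        simpa using coveringCard_mul_le hr hp
    _ = Real.exp y := one_mul _

end CoveringCard

theorem tendsto_log_coveringCard {ι : Type*} {l : Filter ι} {α : ι → Type*}
    [∀ i, MeasurableSpace (α i)] [∀ i, MeasurableSingletonClass (α i)]
    {μ : ∀ i, Measure (α i)} [∀ i, IsProbabilityMeasure (μ i)] {a b : ι → ℝ} {F : ℝ → ℝ}
    {p q : ℝ} (hp : 0 < p) (hb : Tendsto b l atTop)
    (hF : ∀ x, Tendsto
      (fun i ↦ (μ i).real {k | Real.exp (-(a i + x * b i)) ≤ (μ i).real {k}}) l (𝓝 (F x)))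
    (hlt : ∀ x < q, F x < p) (hgt : ∀ x > q, p < F x) :
    Tendsto (fun i ↦ (Real.log (coveringCard (μ i) p) - a i) / b i) l (𝓝 q) := by
  have hle : ∀ x > q, ∀ᶠ i in l,
      p ≤ (μ i).real {k | Real.exp (-(a i + x * b i)) ≤ (μ i).real {k}} := fun x hx ↦
    ((hF x).eventually (lt_mem_nhds (hgt x hx))).mono fun _ ↦ le_of_lt
  refine tendsto_order.2 ⟨fun y hy ↦ ?_, fun y hy ↦ ?_⟩
  · obtain ⟨x, hyx, hxq⟩ := exists_between hy
    obtain ⟨c, hFc, hcp⟩ := exists_between (hlt x hxq)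
    have hx : Tendsto (fun i ↦ x + Real.log (p - c) / b i) l (𝓝 x) := by
      simpa using tendsto_const_nhds.add (hb.const_div_atTop (Real.log (p - c)))
    filter_upwards [(hF x).eventually (gt_mem_nhds hFc), hx.eventually (lt_mem_nhds hyx),
      hle (q + 1) (by linarith), hb.eventually_gt_atTop 0] with i hFi hyi hS hbi
    have hlog := add_log_le_log_coveringCard (y := a i + x * b i) (sub_pos.2 hcp)
      (exists_finset_le_measureReal (Real.exp_pos _) hS) (by linarith)
    refine hyi.trans_le ?_
    rw [le_div_iff₀ hbi, add_mul, div_mul_cancel₀ _ hbi.ne']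
    linarith
  · obtain ⟨x, hqx, hxy⟩ := exists_between hy
    filter_upwards [hle x hqx, hb.eventually_gt_atTop 0] with i hi hbi
    refine lt_of_le_of_lt ?_ hxy
    rw [div_le_iff₀ hbi]
    linarith [log_coveringCard_le hp hi]

section Quantile

variable {μ : Measure ℝ} {p x : ℝ}

lemma cdf_lt_of_lt_sInf (hp : 0 < p) (hx : x < sInf {y | p ≤ cdf μ y}) : cdf μ x < p := by
  have hbdd : BddBelow {y | p ≤ cdf μ y} := by
    obtain ⟨z, hz⟩ := ((tendsto_cdf_atBot μ).eventually (gt_mem_nhds hp)).exists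
    exact ⟨z, fun y hy ↦ (monotone_cdf μ).reflect_lt (hz.trans_le hy) |>.le⟩
  by_contra! h
  exact hx.not_ge (csInf_le hbdd h)

variable [IsProbabilityMeasure μ] [μ.IsOpenPosMeasure]

lemma strictMono_cdf : StrictMono (cdf μ) := fun x y hxy ↦ by
  have hIoc : 0 < μ.real (Ioc x y) :=
    (ENNReal.toReal_pos ((Measure.measure_Ioo_pos μ).2 hxy).ne' (measure_ne_top μ _)).trans_le
      (measureReal_mono Ioo_subset_Ioc_self)
  have hIic : μ.real (Iic x) + μ.real (Ioc x y) = μ.real (Iic y) := by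
    rw [← measureReal_union (Iic_disjoint_Ioc le_rfl) measurableSet_Ioc,
      Iic_union_Ioc_eq_Iic hxy.le]
  rw [cdf_eq_real, cdf_eq_real]
  linarith

lemma lt_cdf_of_sInf_lt (hp : p < 1) (hx : sInf {y | p ≤ cdf μ y} < x) :
    p < cdf μ x := by
  have hne : {y | p ≤ cdf μ y}.Nonempty :=
    ((tendsto_cdf_atTop μ).eventually (lt_mem_nhds hp)).exists.imp fun _ ↦ le_of_lt
  obtain ⟨y, hy, hyx⟩ := exists_lt_of_csInf_lt hne hx
  exact lt_of_le_of_lt hy (strictMono_cdf hyx)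

end Quantile

lemma isOpenPosMeasure_gaussianReal (m : ℝ) {v : NNReal} (hv : v ≠ 0) :
    (gaussianReal m v).IsOpenPosMeasure :=
  (gaussianReal_absolutelyContinuous' m hv).isOpenPosMeasure

section Lyapunov

lemma norm_prod_sub_prod_le {ι R : Type*} [NormedCommRing R] [NormOneClass R] (s : Finset ι)
    {f g : ι → R} (hf : ∀ i ∈ s, ‖f i‖ ≤ 1) (hg : ∀ i ∈ s, ‖g i‖ ≤ 1) :
    ‖∏ i ∈ s, f i - ∏ i ∈ s, g i‖ ≤ ∑ i ∈ s, ‖f i - g i‖ := by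
  classical
  induction s using Finset.induction_on with
  | empty => simp
  | insert i s hi ih =>
    simp only [Finset.forall_mem_insert] at hf hg
    have hfs : ‖∏ j ∈ s, f j‖ ≤ 1 :=
      (s.norm_prod_le f).trans (Finset.prod_le_one (fun _ _ ↦ norm_nonneg _) hf.2)
    rw [Finset.prod_insert hi, Finset.prod_insert hi, Finset.sum_insert hi]
    calc ‖f i * ∏ j ∈ s, f j - g i * ∏ j ∈ s, g j‖
        = ‖(f i - g i) * ∏ j ∈ s, f j + g i * (∏ j ∈ s, f j - ∏ j ∈ s, g j)‖ := by ring_nf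
      _ ≤ ‖f i - g i‖ * ‖∏ j ∈ s, f j‖ + ‖g i‖ * ‖∏ j ∈ s, f j - ∏ j ∈ s, g j‖ :=
          (norm_add_le _ _).trans (add_le_add (norm_mul_le _ _) (norm_mul_le _ _))
      _ ≤ ‖f i - g i‖ * 1 + 1 * ∑ j ∈ s, ‖f j - g j‖ := by
          gcongr
          exacts [hg.1, ih hf.2 hg.2]
      _ = ‖f i - g i‖ + ∑ j ∈ s, ‖f j - g j‖ := by ring

lemma norm_exp_mul_I_sub_taylor_le (x : ℝ) :
    ‖Complex.exp (x * Complex.I) - (1 + x * Complex.I - x ^ 2 / 2)‖ ≤ 4 * |x| ^ 3 := by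
  rcases le_total |x| 1 with hx | hx
  · have htaylor : 1 + x * Complex.I - x ^ 2 / 2 =
        ∑ m ∈ Finset.range 3, (x * Complex.I) ^ m / (m.factorial : ℂ) := by
      simp only [Finset.sum_range_succ, Finset.sum_range_zero, mul_pow, Complex.I_sq, Nat.factorial]
      push_cast
      ring
    have h := Complex.exp_bound (x := x * Complex.I) (by simpa using hx) (n := 3) (by norm_num)
    rw [htaylor]
    refine h.trans ?_
    norm_num [Nat.factorial]
    nlinarith [pow_nonneg (abs_nonneg x) 3]
  · have htaylor : ‖(1 + x * Complex.I - x ^ 2 / 2 : ℂ)‖ ≤ 1 + |x| + |x| ^ 2 / 2 := by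
      refine (norm_sub_le _ _).trans (add_le_add ((norm_add_le _ _).trans ?_) ?_) <;> simp
    calc ‖Complex.exp (x * Complex.I) - (1 + x * Complex.I - x ^ 2 / 2)‖
        ≤ 1 + (1 + |x| + |x| ^ 2 / 2) :=
          (norm_sub_le _ _).trans
            (add_le_add (Complex.norm_exp_ofReal_mul_I x).le htaylor)
      _ ≤ 4 * |x| ^ 3 := by
          nlinarith [one_le_pow₀ hx (n := 3), le_self_pow₀ hx (n := 3) (by norm_num),
            pow_le_pow_right₀ hx (m := 2) (n := 3) (by norm_num)]

lemma abs_exp_neg_sq_div_two_sub_taylor_le (x : ℝ) :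
    |Real.exp (-(x ^ 2 / 2)) - (1 - x ^ 2 / 2)| ≤ |x| ^ 3 := by
  rcases le_total |x| 1 with hx | hx
  · have hsq : x ^ 2 / 2 ≤ 1 := by nlinarith [sq_abs x, abs_nonneg x]
    have h := Real.norm_exp_sub_one_sub_id_le (x := -(x ^ 2 / 2))
      (by rwa [norm_neg, Real.norm_of_nonneg (by positivity)])
    rw [norm_neg, Real.norm_eq_abs, Real.norm_of_nonneg (by positivity), ← sq_abs x] at h
    rw [← sq_abs x]
    calc _ ≤ (|x| ^ 2 / 2) ^ 2 := by convert h using 2; ring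
      _ = |x| ^ 3 * (|x| / 4) := by ring
      _ ≤ |x| ^ 3 * 1 := by gcongr; linarith
      _ = |x| ^ 3 := mul_one _
  · have hexp : Real.exp (-(x ^ 2 / 2)) ≤ 1 := Real.exp_le_one_iff.2 (by linarith [sq_nonneg x])
    have hlin := Real.one_sub_le_exp_neg (x ^ 2 / 2)
    calc |Real.exp (-(x ^ 2 / 2)) - (1 - x ^ 2 / 2)|
        = Real.exp (-(x ^ 2 / 2)) - (1 - x ^ 2 / 2) := abs_of_nonneg (sub_nonneg.2 hlin)
      _ ≤ |x| ^ 2 := by rw [sq_abs]; nlinarith [sq_nonneg x]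
      _ ≤ |x| ^ 3 := pow_le_pow_right₀ hx (by norm_num)

variable {Ω : Type*} [MeasurableSpace Ω] {P : Measure Ω} [IsProbabilityMeasure P] {X : Ω → ℝ}

lemma sqrt_integral_sq_pow_three_le (hX : MemLp X 3 P) :
    √(∫ ω, X ω ^ 2 ∂P) ^ 3 ≤ ∫ ω, |X ω| ^ 3 ∂P := by
  set s := √(∫ ω, X ω ^ 2 ∂P)
  have hs2 : s ^ 2 = ∫ ω, X ω ^ 2 ∂P := Real.sq_sqrt (integral_nonneg fun _ ↦ sq_nonneg _)
  have hX2 : Integrable (fun ω ↦ X ω ^ 2) P := (hX.mono_exponent (by norm_num)).integrable_sq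
  have hX3 : Integrable (fun ω ↦ |X ω| ^ 3) P := hX.integrable_norm_pow'
  have hamgm (x : ℝ) : 3 * s * x ^ 2 ≤ 2 * |x| ^ 3 + s ^ 3 := by
    have hnonneg : 0 ≤ 2 * |x| + s := by positivity
    rw [← sq_abs]
    nlinarith [mul_nonneg (sq_nonneg (|x| - s)) hnonneg]
  have hint := integral_mono (hX2.const_mul (3 * s)) ((hX3.const_mul 2).add (integrable_const _))
    fun ω ↦ hamgm (X ω)
  simp only [Pi.add_apply] at hint
  rw [integral_const_mul, integral_add (hX3.const_mul 2) (integrable_const _),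
    integral_const_mul, ← hs2, integral_const, probReal_univ, one_smul] at hint
  linarith

lemma norm_integral_exp_mul_I_sub_taylor_le (hX : MemLp X 3 P) (h0 : P[X] = 0) :
    ‖∫ ω, Complex.exp (X ω * Complex.I) ∂P - ((1 - (∫ ω, X ω ^ 2 ∂P) / 2 : ℝ) : ℂ)‖ ≤
      4 * ∫ ω, |X ω| ^ 3 ∂P := by
  have hXm : AEMeasurable X P := hX.aemeasurable
  have hX1 : Integrable (fun ω ↦ (X ω : ℂ)) P := (hX.integrable (by norm_num)).ofReal
  have hX2 : Integrable (fun ω ↦ (X ω : ℂ) ^ 2) P := by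
    simpa using (hX.mono_exponent (q := 3) (p := 2) (by norm_num)).integrable_sq.ofReal (𝕜 := ℂ)
  have hexp : Integrable (fun ω ↦ Complex.exp (X ω * Complex.I)) P :=
    .of_bound (C := 1) (AEMeasurable.aestronglyMeasurable (by fun_prop))
      (.of_forall fun ω ↦ (Complex.norm_exp_ofReal_mul_I _).le)
  have hlin : Integrable (fun ω ↦ 1 + (X ω : ℂ) * Complex.I) P :=
    (integrable_const _).add (hX1.mul_const _)
  have hquad : Integrable (fun ω ↦ 1 + X ω * Complex.I - (X ω : ℂ) ^ 2 / 2) P :=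
    hlin.sub (hX2.div_const 2)
  have htaylor : ∫ ω, (1 + X ω * Complex.I - (X ω : ℂ) ^ 2 / 2) ∂P =
      ((1 - (∫ ω, X ω ^ 2 ∂P) / 2 : ℝ) : ℂ) := by
    have h0' : ∫ ω, (X ω : ℂ) ∂P = 0 := by rw [integral_complex_ofReal, h0, Complex.ofReal_zero]
    have h2 : ∫ ω, (X ω : ℂ) ^ 2 ∂P = (∫ ω, X ω ^ 2 ∂P : ℝ) := by
      simp [← integral_complex_ofReal]
    rw [integral_sub hlin (hX2.div_const 2), integral_add (integrable_const _) (hX1.mul_const _),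
      integral_mul_const, integral_div, h0', h2]
    simp
  rw [← htaylor, ← integral_sub hexp hquad, ← integral_const_mul]
  exact norm_integral_le_of_norm_le (hX.integrable_norm_pow'.const_mul 4)
    (.of_forall fun ω ↦ norm_exp_mul_I_sub_taylor_le (X ω))

lemma norm_integral_exp_mul_I_sub_exp_le (hX : MemLp X 3 P) (h0 : P[X] = 0) :
    ‖∫ ω, Complex.exp (X ω * Complex.I) ∂P - (Real.exp (-((∫ ω, X ω ^ 2 ∂P) / 2)) : ℝ)‖ ≤
      5 * ∫ ω, |X ω| ^ 3 ∂P := by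
  have hsq : √(∫ ω, X ω ^ 2 ∂P) ^ 2 = ∫ ω, X ω ^ 2 ∂P :=
    Real.sq_sqrt (integral_nonneg fun _ ↦ sq_nonneg _)
  have hexp := abs_exp_neg_sq_div_two_sub_taylor_le √(∫ ω, X ω ^ 2 ∂P)
  rw [hsq, abs_of_nonneg (Real.sqrt_nonneg _)] at hexp
  calc _ ≤ ‖∫ ω, Complex.exp (X ω * Complex.I) ∂P - ((1 - (∫ ω, X ω ^ 2 ∂P) / 2 : ℝ) : ℂ)‖ +
        ‖((1 - (∫ ω, X ω ^ 2 ∂P) / 2 : ℝ) - (Real.exp (-((∫ ω, X ω ^ 2 ∂P) / 2)) : ℝ) : ℂ)‖ :=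
        norm_sub_le_norm_sub_add_norm_sub _ _ _
    _ ≤ 4 * (∫ ω, |X ω| ^ 3 ∂P) + ∫ ω, |X ω| ^ 3 ∂P := by
        refine add_le_add (norm_integral_exp_mul_I_sub_taylor_le hX h0) ?_
        rw [norm_sub_rev, ← Complex.ofReal_sub, Complex.norm_real, Real.norm_eq_abs]
        exact hexp.trans (sqrt_integral_sq_pow_three_le hX)
    _ = 5 * ∫ ω, |X ω| ^ 3 ∂P := by ring

lemma norm_charFun_map_sub_exp_le (hX : MemLp X 3 P) (h0 : P[X] = 0) (t : ℝ) :
    ‖charFun (P.map X) t - (Real.exp (-((∫ ω, X ω ^ 2 ∂P) * t ^ 2 / 2)) : ℝ)‖ ≤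
      5 * |t| ^ 3 * ∫ ω, |X ω| ^ 3 ∂P := by
  have h := norm_integral_exp_mul_I_sub_exp_le (hX.const_mul t)
    (by rw [integral_const_mul, h0, mul_zero])
  simp only [mul_pow, abs_mul, integral_const_mul, Complex.ofReal_mul] at h
  rw [charFun_apply_real, integral_map hX.aemeasurable (by fun_prop)]
  rwa [mul_comm (∫ ω, X ω ^ 2 ∂P), mul_assoc]

lemma norm_charFun_map_sum_sub_exp_le {ι : Type*} [Fintype ι] {X : ι → Ω → ℝ}
    (hindep : iIndepFun X P) (hX : ∀ i, MemLp (X i) 3 P) (h0 : ∀ i, P[X i] = 0) (t : ℝ) :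
    ‖charFun (P.map fun ω ↦ ∑ i, X i ω) t -
        (Real.exp (-((∑ i, ∫ ω, X i ω ^ 2 ∂P) * t ^ 2 / 2)) : ℝ)‖ ≤
      5 * |t| ^ 3 * ∑ i, ∫ ω, |X i ω| ^ 3 ∂P := by
  have hprod : (Real.exp (-((∑ i, ∫ ω, X i ω ^ 2 ∂P) * t ^ 2 / 2)) : ℂ) =
      ∏ i, (Real.exp (-((∫ ω, X i ω ^ 2 ∂P) * t ^ 2 / 2)) : ℂ) := by
    rw [← Complex.ofReal_prod, ← Real.exp_sum, Finset.sum_neg_distrib, ← Finset.sum_div,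
      ← Finset.sum_mul]
  rw [hindep.charFun_map_fun_sum_eq_prod fun i ↦ (hX i).aemeasurable, Finset.prod_apply, hprod,
    Finset.mul_sum]
  refine (norm_prod_sub_prod_le _ (fun i _ ↦ ?_) fun i _ ↦ ?_).trans
    (Finset.sum_le_sum fun i _ ↦ norm_charFun_map_sub_exp_le (hX i) (h0 i) t)
  · have := Measure.isProbabilityMeasure_map (hX i).aemeasurable
    exact norm_charFun_le_one t
  · rw [Complex.norm_real, Real.norm_of_nonneg (Real.exp_pos _).le, Real.exp_le_one_iff]
    have : 0 ≤ ∫ ω, X i ω ^ 2 ∂P := integral_nonneg fun _ ↦ sq_nonneg _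
    rw [neg_nonpos]
    positivity

end Lyapunov

theorem tendstoInDistribution_sum_gaussianReal {Ω' : Type*} {κ : ℕ → Type*}
    [∀ n, Fintype (κ n)] {Ω : ℕ → Type*} [∀ n, MeasurableSpace (Ω n)] {P : ∀ n, Measure (Ω n)}
    [∀ n, IsProbabilityMeasure (P n)] [MeasurableSpace Ω'] {P' : Measure Ω'}
    [IsProbabilityMeasure P'] {X : ∀ n, κ n → Ω n → ℝ} {Y : Ω' → ℝ} {v : NNReal}
    (hY : HasLaw Y (gaussianReal 0 v) P') (hindep : ∀ n, iIndepFun (X n) (P n))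
    (hX : ∀ n i, MemLp (X n i) 3 (P n)) (h0 : ∀ n i, (P n)[X n i] = 0)
    (hvar : Tendsto (fun n ↦ ∑ i, ∫ ω, X n i ω ^ 2 ∂P n) atTop (𝓝 v))
    (hthird : Tendsto (fun n ↦ ∑ i, ∫ ω, |X n i ω| ^ 3 ∂P n) atTop (𝓝 0)) :
    TendstoInDistribution (fun n ω ↦ ∑ i, X n i ω) atTop Y P P' where
  forall_aemeasurable n := Finset.aemeasurable_fun_sum _ fun i _ ↦ (hX n i).aemeasurable
  tendsto := by
    refine ProbabilityMeasure.tendsto_iff_tendsto_charFun.2 fun t ↦ ?_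
    rw! [hY.map_eq]
    have hgauss : charFun (gaussianReal 0 v) t = (Real.exp (-(v * t ^ 2 / 2)) : ℝ) := by
      simp [charFun_gaussianReal]
    have hexp : Tendsto (fun n ↦ (Real.exp (-((∑ i, ∫ ω, X n i ω ^ 2 ∂P n) * t ^ 2 / 2)) : ℂ))
        atTop (𝓝 (charFun (gaussianReal 0 v) t)) := by
      rw [hgauss]
      exact (Complex.continuous_ofReal.comp
        (by fun_prop : Continuous fun x ↦ Real.exp (-(x * t ^ 2 / 2)))).tendsto _ |>.comp hvar
    refine hexp.congr_dist (squeeze_zero (fun _ ↦ dist_nonneg) (fun n ↦ ?_)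
      (by simpa using hthird.const_mul (5 * |t| ^ 3)))
    rw [dist_comm, dist_eq_norm]
    exact norm_charFun_map_sum_sub_exp_le (hindep n) (hX n) (h0 n) t

lemma tendsto_measureReal_setOf_le {ι Ω' : Type*} {l : Filter ι} {Ω : ι → Type*}
    [∀ i, MeasurableSpace (Ω i)] {P : ∀ i, Measure (Ω i)} [∀ i, IsProbabilityMeasure (P i)]
    [MeasurableSpace Ω'] {P' : Measure Ω'} [IsProbabilityMeasure P'] {X : ∀ i, Ω i → ℝ}
    {Y : Ω' → ℝ} (hXY : TendstoInDistribution X l Y P P') {x : ℝ} (hx : P'.map Y {x} = 0) :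
    Tendsto (fun i ↦ (P i).real {ω | X i ω ≤ x}) l (𝓝 (cdf (P'.map Y) x)) := by
  have := Measure.isProbabilityMeasure_map hXY.aemeasurable_limit
  have h := ProbabilityMeasure.tendsto_measure_of_null_frontier_of_tendsto' hXY.tendsto
    (E := Iic x) (by simpa [frontier_Iic] using hx)
  rw [cdf_eq_real]
  refine ((ENNReal.tendsto_toReal (measure_ne_top (P'.map Y) _)).comp h).congr fun i ↦ ?_
  exact congrArg ENNReal.toReal
    (Measure.map_apply_of_aemeasurable (hXY.forall_aemeasurable i) measurableSet_Iic)

section GeometricMoments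

lemma pow_succ_le_factorial_mul_choose (n k : ℕ) :
    n ^ (k + 1) ≤ (k + 1).factorial * (n + k).choose (k + 1) := by
  simpa [Nat.ascFactorial_eq_factorial_mul_choose', ← add_assoc] using
    Nat.pow_succ_le_ascFactorial n (k + 1)

lemma hasSum_add_choose_succ_mul_geometric {w : ℝ} (hw : ‖w‖ < 1) (k : ℕ) :
    HasSum (fun n : ℕ ↦ ((n + k).choose (k + 1) : ℝ) * w ^ n) (w / (1 - w) ^ (k + 2)) := by
  have h := (hasSum_choose_mul_geometric_of_norm_lt_one (k + 1) hw).mul_left w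
  rw [← hasSum_nat_add_iff' 1, Finset.sum_range_one, zero_add, Nat.choose_succ_self, Nat.cast_zero,
    zero_mul, sub_zero, ← mul_one_div]
  refine h.congr_fun fun n ↦ ?_
  rw [add_right_comm n 1 k, add_assoc n k 1]
  ring

variable {p : unitInterval}

lemma hasSum_geometricMeasure_choose (hp : p ≠ 0) (k : ℕ) :
    HasSum (fun n : ℕ ↦ (1 - p : ℝ) ^ n * p * ((n + k).choose (k + 1) : ℝ))
      ((1 - p) / (p : ℝ) ^ (k + 1)) := by
  have hp₀ : (0 : ℝ) < p := unitInterval.pos_iff_ne_zero.2 hp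
  have hw : ‖(1 - p : ℝ)‖ < 1 := by
    rw [Real.norm_of_nonneg (unitInterval.one_minus_nonneg p)]
    linarith
  have h := (hasSum_add_choose_succ_mul_geometric hw k).mul_left (p : ℝ)
  rw [sub_sub_cancel, show (p : ℝ) * ((1 - p) / (p : ℝ) ^ (k + 2)) = (1 - p) / (p : ℝ) ^ (k + 1) by
    rw [pow_succ _ (k + 1)]; field] at h
  exact h.congr_fun fun n ↦ by ring

lemma integrable_choose_geometricMeasure (hp : p ≠ 0) (k : ℕ) :
    Integrable (fun n : ℕ ↦ ((n + k).choose (k + 1) : ℝ)) (geometricMeasure p) := by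
  simpa [integrable_geometricMeasure_iff hp] using (hasSum_geometricMeasure_choose hp k).summable

lemma integral_choose_geometricMeasure (hp : p ≠ 0) (k : ℕ) :
    ∫ n, ((n + k).choose (k + 1) : ℝ) ∂geometricMeasure p = (1 - p) / (p : ℝ) ^ (k + 1) := by
  simpa [integral_geometricMeasure hp] using (hasSum_geometricMeasure_choose hp k).tsum_eq

lemma integral_natCast_geometricMeasure (hp : p ≠ 0) :
    ∫ n, (n : ℝ) ∂geometricMeasure p = (1 - p) / p := by
  simpa using integral_choose_geometricMeasure hp 0

lemma natCast_pow_succ_le (n k : ℕ) :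
    (n : ℝ) ^ (k + 1) ≤ (k + 1).factorial * ((n + k).choose (k + 1) : ℝ) :=
  mod_cast pow_succ_le_factorial_mul_choose n k

lemma integrable_natCast_pow_geometricMeasure (hp : p ≠ 0) (k : ℕ) :
    Integrable (fun n : ℕ ↦ (n : ℝ) ^ (k + 1)) (geometricMeasure p) :=
  ((integrable_choose_geometricMeasure hp k).const_mul _).mono' (by fun_prop)
    (.of_forall fun n ↦ by simpa using natCast_pow_succ_le n k)

lemma integral_natCast_pow_geometricMeasure_le (hp : p ≠ 0) (k : ℕ) :
    ∫ n, (n : ℝ) ^ (k + 1) ∂geometricMeasure p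
      ≤ (k + 1).factorial * ((1 - p) / (p : ℝ) ^ (k + 1)) := by
  rw [← integral_choose_geometricMeasure hp, ← integral_const_mul]
  exact integral_mono (integrable_natCast_pow_geometricMeasure hp k)
    ((integrable_choose_geometricMeasure hp k).const_mul _) fun n ↦ natCast_pow_succ_le n k

lemma memLp_natCast_geometricMeasure (hp : p ≠ 0) :
    MemLp (fun n : ℕ ↦ (n : ℝ)) 3 (geometricMeasure p) := by
  rw [← integrable_norm_rpow_iff (by fun_prop) (by norm_num) (by norm_num)]
  simpa using integrable_natCast_pow_geometricMeasure hp 2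

lemma integral_natCast_sub_sq_geometricMeasure (hp : p ≠ 0) :
    ∫ n, ((n : ℝ) - (1 - p) / p) ^ 2 ∂geometricMeasure p = (1 - p) / (p : ℝ) ^ 2 := by
  have hp₀ : (p : ℝ) ≠ 0 := by simpa using hp
  have hsq (n : ℕ) : ((n : ℝ) - (1 - p) / p) ^ 2 = 2 * ((n + 1).choose (1 + 1) : ℝ)
      - (1 + 2 * ((1 - p) / p)) * n + ((1 - p) / p) ^ 2 := by
    rw [one_add_one_eq_two, Nat.cast_choose_two]
    push_cast
    ring
  have h₁ : Integrable (fun n : ℕ ↦ (1 + 2 * ((1 - p) / p) : ℝ) * n) (geometricMeasure p) := by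
    simpa using (integrable_natCast_pow_geometricMeasure hp 0).const_mul (1 + 2 * ((1 - p) / p) : ℝ)
  have h₂ := (integrable_choose_geometricMeasure hp 1).const_mul 2
  have h₂₁ : Integrable (fun n : ℕ ↦ 2 * ((n + 1).choose (1 + 1) : ℝ) - (1 + 2 * ((1 - p) / p)) * n)
      (geometricMeasure p) := h₂.sub h₁
  simp_rw [hsq]
  rw [integral_add h₂₁ (integrable_const _), integral_sub h₂ h₁, integral_const_mul,
    integral_const_mul, integral_choose_geometricMeasure hp 1,
    integral_natCast_geometricMeasure hp, integral_const, probReal_univ, one_smul]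
  field

lemma integral_abs_natCast_sub_pow_three_geometricMeasure_le (hp : p ≠ 0) :
    ∫ n, |(n : ℝ) - (1 - p) / p| ^ 3 ∂geometricMeasure p ≤ 7 * ((1 - p) / (p : ℝ) ^ 3) := by
  have hp₀ : (0 : ℝ) < p := unitInterval.pos_iff_ne_zero.2 hp
  have hq₀ : (0 : ℝ) ≤ 1 - p := unitInterval.one_minus_nonneg p
  have hq₁ : (1 - p : ℝ) ≤ 1 := unitInterval.one_minus_le_one p
  have hm₀ : (0 : ℝ) ≤ (1 - p) / p := by positivity
  have habs (n : ℕ) : |(n : ℝ) - (1 - p) / p| ^ 3 ≤ (n : ℝ) ^ 3 + ((1 - p) / p) ^ 3 := by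
    rcases abs_cases ((n : ℝ) - (1 - p) / p) with ⟨h, hn⟩ | ⟨h, hn⟩ <;> rw [h]
    · have := pow_le_pow_left₀ hn (sub_le_self (n : ℝ) hm₀) 3
      linarith [pow_nonneg hm₀ 3]
    · have := pow_le_pow_left₀ (by linarith)
        (by linarith [n.cast_nonneg (α := ℝ)] : -((n : ℝ) - (1 - p) / p) ≤ (1 - p) / p) 3
      linarith [pow_nonneg (n.cast_nonneg (α := ℝ)) 3]
  have hint := integrable_natCast_pow_geometricMeasure hp 2
  calc ∫ n, |(n : ℝ) - (1 - p) / p| ^ 3 ∂geometricMeasure p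
      ≤ ∫ n, ((n : ℝ) ^ 3 + ((1 - p) / p) ^ 3) ∂geometricMeasure p :=
        integral_mono_of_nonneg (.of_forall fun n ↦ by positivity)
          (hint.add (integrable_const _)) (.of_forall habs)
    _ = ∫ n, (n : ℝ) ^ 3 ∂geometricMeasure p + ((1 - p) / p) ^ 3 := by
        rw [integral_add hint (integrable_const _), integral_const, probReal_univ, one_smul]
    _ ≤ 6 * ((1 - p) / (p : ℝ) ^ 3) + (1 - p) / (p : ℝ) ^ 3 := by
        rw [div_pow]
        gcongr
        · exact integral_natCast_pow_geometricMeasure_le hp 2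
        · exact pow_le_of_le_one hq₀ hq₁ (by norm_num)
    _ = 7 * ((1 - p) / (p : ℝ) ^ 3) := by ring

end GeometricMoments

section GeometricSurprisal

variable {w : unitInterval}

/-- The surprisal `-log ((1 - w) * w ^ n)` of the value `n` of a geometric law of ratio `w`, centred
at its mean. -/
noncomputable def centredSurprisal (w : unitInterval) (n : ℕ) : ℝ :=
  -Real.log w * (n - w / (1 - w))

/-- The entropy of the geometric law `n ↦ (1 - w) * w ^ n`, that is, the mean of its surprisal. -/
noncomputable def geometricEntropy (w : unitInterval) : ℝ :=
  -Real.log w * (w / (1 - w)) - Real.log (1 - w)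

lemma neg_log_geometricMeasure_singleton (hw₀ : w ≠ 0) (hw₁ : w ≠ 1) (n : ℕ) :
    -Real.log ((geometricMeasure (unitInterval.symm w)).real {n})
      = geometricEntropy w + centredSurprisal w n := by
  have hw : (w : ℝ) ≠ 0 := by simpa using hw₀
  have hw' : (1 - w : ℝ) ≠ 0 := sub_ne_zero.2 fun h ↦ hw₁ (Subtype.ext h.symm)
  rw [geometricMeasure_real_singleton (by simpa using hw₁), unitInterval.coe_symm_eq,
    sub_sub_cancel, Real.log_mul (pow_ne_zero n hw) hw', Real.log_pow, geometricEntropy,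
    centredSurprisal]
  ring

lemma integral_centredSurprisal (hw : w ≠ 1) :
    ∫ n, centredSurprisal w n ∂geometricMeasure (unitInterval.symm w) = 0 := by
  have hint : Integrable (fun n : ℕ ↦ (n : ℝ)) (geometricMeasure (unitInterval.symm w)) := by
    simpa using integrable_natCast_pow_geometricMeasure (by simpa using hw) 0
  simp_rw [centredSurprisal]
  rw [integral_const_mul, integral_sub hint (integrable_const _),
    integral_natCast_geometricMeasure (by simpa using hw)]
  simp

lemma memLp_centredSurprisal (hw : w ≠ 1) :
    MemLp (centredSurprisal w) 3 (geometricMeasure (unitInterval.symm w)) :=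
  ((memLp_natCast_geometricMeasure (by simpa using hw)).sub (memLp_const _)).const_mul _

lemma integral_centredSurprisal_sq (hw : w ≠ 1) :
    ∫ n, centredSurprisal w n ^ 2 ∂geometricMeasure (unitInterval.symm w)
      = w / (1 - w : ℝ) ^ 2 * (-Real.log w) ^ 2 := by
  have h := integral_natCast_sub_sq_geometricMeasure (p := unitInterval.symm w) (by simpa using hw)
  rw [unitInterval.coe_symm_eq, sub_sub_cancel] at h
  simp_rw [centredSurprisal, mul_pow]
  rw [integral_const_mul, h, mul_comm]

lemma integral_abs_centredSurprisal_pow_three_le (hw : w ≠ 1) :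
    ∫ n, |centredSurprisal w n| ^ 3 ∂geometricMeasure (unitInterval.symm w)
      ≤ 7 * (w / (1 - w : ℝ) ^ 3 * (-Real.log w) ^ 3) := by
  have h := integral_abs_natCast_sub_pow_three_geometricMeasure_le (p := unitInterval.symm w)
    (by simpa using hw)
  rw [unitInterval.coe_symm_eq, sub_sub_cancel] at h
  have hlog : 0 ≤ -Real.log w := neg_nonneg.2 (Real.log_nonpos w.2.1 w.2.2)
  simp_rw [centredSurprisal, abs_mul, mul_pow, abs_of_nonneg hlog]
  rw [integral_const_mul]
  exact (mul_le_mul_of_nonneg_left h (pow_nonneg hlog 3)).trans_eq (by ring)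

end GeometricSurprisal

section GeometricProduct

variable {ι : Type*} [Fintype ι] {ω : ι → unitInterval}

/-- The law on multi-indices with independent geometric coordinates of ratios `ω i`, whose point
masses `∏ i, ω i ^ k i * (1 - ω i)` are the eigenvalues of the tensor product field. -/
noncomputable abbrev geometricProduct (ω : ι → unitInterval) : Measure (ι → ℕ) :=
  Measure.pi fun i ↦ geometricMeasure (unitInterval.symm (ω i))

lemma measureReal_geometricProduct_singleton (hω : ∀ i, ω i ≠ 1) (k : ι → ℕ) :
    (geometricProduct ω).real {k} = ∏ i, (1 - ω i : ℝ) * ω i ^ k i := by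
  rw [measureReal_def, Measure.pi_singleton, ENNReal.toReal_prod]
  refine Finset.prod_congr rfl fun i _ ↦ ?_
  rw [← measureReal_def, geometricMeasure_real_singleton (by simpa using hω i),
    unitInterval.coe_symm_eq, sub_sub_cancel, mul_comm]

lemma exp_neg_le_geometricProduct_singleton_iff (hω₀ : ∀ i, ω i ≠ 0) (hω₁ : ∀ i, ω i ≠ 1)
    (k : ι → ℕ) (y : ℝ) :
    Real.exp (-(∑ i, geometricEntropy (ω i) + y)) ≤ (geometricProduct ω).real {k}
      ↔ ∑ i, centredSurprisal (ω i) (k i) ≤ y := by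
  have hpos (i : ι) : 0 < (geometricMeasure (unitInterval.symm (ω i))).real {k i} :=
    geometricMeasure_real_singleton_pos (by simpa using hω₁ i) (by simpa using hω₀ i) _
  have hlog : -Real.log ((geometricProduct ω).real {k})
      = ∑ i, geometricEntropy (ω i) + ∑ i, centredSurprisal (ω i) (k i) := by
    simp_rw [measureReal_def, Measure.pi_singleton, ENNReal.toReal_prod, ← measureReal_def]
    rw [Real.log_prod fun i _ ↦ (hpos i).ne', ← Finset.sum_neg_distrib, ← Finset.sum_add_distrib]
    exact Finset.sum_congr rfl fun i _ ↦ neg_log_geometricMeasure_singleton (hω₀ i) (hω₁ i) (k i)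
  have hmass : 0 < (geometricProduct ω).real {k} := by
    rw [measureReal_def, Measure.pi_singleton, ENNReal.toReal_prod]
    exact Finset.prod_pos fun i _ ↦ hpos i
  rw [← Real.le_log_iff_exp_le hmass, neg_le, hlog, add_le_add_iff_left]

lemma integral_comp_eval_geometricProduct (f : ℕ → ℝ) (i : ι) :
    ∫ k, f (k i) ∂geometricProduct ω = ∫ n, f n ∂geometricMeasure (unitInterval.symm (ω i)) :=
  integral_comp_eval (X := fun _ ↦ ℕ) .of_discrete

end GeometricProduct

theorem tendstoInDistribution_sum_centredSurprisal {κ : ℕ → Type*} [∀ n, Fintype (κ n)]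
    {ω : ∀ n, κ n → unitInterval} (hω : ∀ n i, ω n i ≠ 1) {b : ℕ → ℝ}
    (hb : ∀ᶠ n in atTop, 0 < b n)
    (hvar : Tendsto
      (fun n ↦ (∑ i, (ω n i : ℝ) / (1 - ω n i) ^ 2 * (-Real.log (ω n i)) ^ 2) / b n ^ 2)
      atTop (𝓝 1))
    (hthird : Tendsto
      (fun n ↦ (∑ i, (ω n i : ℝ) / (1 - ω n i) ^ 3 * (-Real.log (ω n i)) ^ 3) / b n ^ 3)
      atTop (𝓝 0)) :
    TendstoInDistribution (fun n (k : κ n → ℕ) ↦ ∑ i, centredSurprisal (ω n i) (k i) / b n) atTop id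
      (fun n ↦ geometricProduct (ω n)) (gaussianReal 0 1) := by
  refine tendstoInDistribution_sum_gaussianReal (v := 1) HasLaw.id
    (fun n ↦ iIndepFun_pi (X := fun i k ↦ centredSurprisal (ω n i) k / b n) fun i ↦ .of_discrete)
    (fun n i ↦ ?_) (fun n i ↦ ?_) (hvar.congr fun n ↦ ?_)
    (squeeze_zero' ?_ ?_ (by simpa using hthird.const_mul 7))
  · simp_rw [div_eq_mul_inv]
    exact ((memLp_centredSurprisal (hω n i)).mul_const (b n)⁻¹).comp_measurePreserving
      (measurePreserving_eval _ i)
  · rw [integral_comp_eval_geometricProduct (fun k ↦ centredSurprisal (ω n i) k / b n),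
      integral_div, integral_centredSurprisal (hω n i), zero_div]
  · rw [Finset.sum_div]
    refine Finset.sum_congr rfl fun i _ ↦ ?_
    rw [integral_comp_eval_geometricProduct (fun k ↦ (centredSurprisal (ω n i) k / b n) ^ 2)]
    simp_rw [div_pow]
    rw [integral_div, integral_centredSurprisal_sq (hω n i)]
  · exact .of_forall fun n ↦ Finset.sum_nonneg fun i _ ↦ integral_nonneg fun k ↦ by positivity
  · filter_upwards [hb] with n hn
    rw [Finset.sum_div, Finset.mul_sum]
    refine Finset.sum_le_sum fun i _ ↦ ?_
    rw [integral_comp_eval_geometricProduct (fun k ↦ |centredSurprisal (ω n i) k / b n| ^ 3)]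
    simp_rw [abs_div, div_pow, abs_of_pos hn]
    rw [integral_div, ← mul_div_assoc]
    gcongr
    exact integral_abs_centredSurprisal_pow_three_le (hω n i)

theorem tendsto_log_coveringCard_geometricProduct {κ : ℕ → Type*} [∀ n, Fintype (κ n)]
    {ω : ∀ n, κ n → unitInterval} (hω₀ : ∀ n i, ω n i ≠ 0) (hω₁ : ∀ n i, ω n i ≠ 1) {b : ℕ → ℝ}
    (hb : Tendsto b atTop atTop)
    (hvar : Tendsto
      (fun n ↦ (∑ i, (ω n i : ℝ) / (1 - ω n i) ^ 2 * (-Real.log (ω n i)) ^ 2) / b n ^ 2)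
      atTop (𝓝 1))
    (hthird : Tendsto
      (fun n ↦ (∑ i, (ω n i : ℝ) / (1 - ω n i) ^ 3 * (-Real.log (ω n i)) ^ 3) / b n ^ 3)
      atTop (𝓝 0))
    {p : ℝ} (hp₀ : 0 < p) (hp₁ : p < 1) :
    Tendsto (fun n ↦ (Real.log (coveringCard (geometricProduct (ω n)) p)
      - ∑ i, geometricEntropy (ω n i)) / b n) atTop (𝓝 (stdGaussianQuantile p)) := by
  have := isOpenPosMeasure_gaussianReal 0 one_ne_zero
  refine tendsto_log_coveringCard (F := stdGaussianCDF) hp₀ hb (fun x ↦ ?_)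
    (fun x ↦ cdf_lt_of_lt_sInf hp₀) fun x ↦ lt_cdf_of_sInf_lt hp₁
  have := nullSingletonClass_gaussianReal (μ := 0) one_ne_zero
  have hpos := hb.eventually_gt_atTop 0
  have hclt := tendsto_measureReal_setOf_le (x := x)
    (tendstoInDistribution_sum_centredSurprisal hω₁ hpos hvar hthird) (by simp)
  rw [Measure.map_id] at hclt
  refine hclt.congr' ?_
  filter_upwards [hpos] with n hn
  simp_rw [exp_neg_le_geometricProduct_singleton_iff (hω₀ n) (hω₁ n), ← Finset.sum_div,
    div_le_iff₀ hn]

lemma tsum_compl_measureReal_singleton {α : Type*} [Countable α] [MeasurableSpace α]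
    [MeasurableSingletonClass α] {μ : Measure α} [IsProbabilityMeasure μ] (S : Finset α) :
    ∑' k : {k // k ∉ S}, μ.real {k.1} = 1 - μ.real S := by
  have hcompl : μ.real (S : Set α)ᶜ = 1 - μ.real S :=
    probReal_compl_eq_one_sub S.measurableSet
  rw [← hcompl, measureReal_def, ← preimage_id (s := (S : Set α)ᶜ),
    ← tsum_measure_preimage_singleton (to_countable _) fun _ _ ↦ .of_discrete]
  exact (ENNReal.tsum_toReal_eq fun _ ↦ measure_ne_top _ _).symm

lemma avgComplexity_eq_coveringCard {ω : ℕ → unitInterval} (hω : ∀ j, ω j ≠ 1) (d : ℕ) {ε : ℝ}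
    (hε : ε ^ 2 < 1) :
    avgComplexity (fun j ↦ ω j) d ε
      = coveringCard (geometricProduct fun j : Fin d ↦ ω j) (1 - ε ^ 2) := by
  rw [avgComplexity, coveringCard]
  congr! 3 with n
  simp_rw [← measureReal_geometricProduct_singleton fun j : Fin d ↦ hω j,
    tsum_compl_measureReal_singleton]
  refine ⟨fun ⟨_, S, hcard, hS⟩ ↦ ⟨S, hcard, by linarith⟩,
    fun ⟨S, hcard, hS⟩ ↦ ⟨?_, S, hcard, by linarith⟩⟩
  refine (Finset.card_pos.2 (Finset.nonempty_iff_ne_empty.2 ?_)).trans_le hcard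
  rintro rfl
  rw [Finset.coe_empty, measureReal_empty] at hS
  linarith

lemma aSeq_eq_sum_geometricEntropy (ω : ℕ → unitInterval) (d : ℕ) :
    aSeq (fun j ↦ ω j) d = ∑ j : Fin d, geometricEntropy (ω j) := by
  rw [aSeq, Finset.sum_range]
  refine Finset.sum_congr rfl fun j _ ↦ ?_
  have h₀ := Real.log_nonpos (ω j).2.1 (ω j).2.2
  have h₁ := Real.log_nonpos (unitInterval.one_minus_nonneg (ω j))
    (unitInterval.one_minus_le_one (ω j))
  rw [abs_of_nonpos h₀, abs_of_nonpos h₁, geometricEntropy]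
  ring

section LogarithmicSums

lemma isEquivalent_sum_range {f g : ℕ → ℝ} (h : f ~[atTop] g) (hg : 0 ≤ g)
    (hsum : Tendsto (fun n ↦ ∑ i ∈ Finset.range n, g i) atTop atTop) :
    (fun n ↦ ∑ i ∈ Finset.range n, f i) ~[atTop] fun n ↦ ∑ i ∈ Finset.range n, g i :=
  (h.isLittleO.sum_range hg hsum).congr_left fun _ ↦ Finset.sum_sub_distrib f g

lemma isEquivalent_pow_succ_sub_pow_succ {α : Type*} {l : Filter α} {u v : α → ℝ}
    (h : u ~[l] v) (p : ℕ) :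
    (fun x ↦ u x ^ (p + 1) - v x ^ (p + 1)) ~[l] fun x ↦ (p + 1) * v x ^ p * (u x - v x) := by
  have hterm : ∀ i ∈ Finset.range (p + 1),
      (fun x ↦ u x ^ i * v x ^ (p - i) - v x ^ p) =o[l] fun x ↦ v x ^ p := fun i hi ↦ by
    have hpow : v ^ i * v ^ (p - i) = v ^ p := by
      rw [← pow_add, Nat.add_sub_cancel' (Finset.mem_range_succ_iff.1 hi)]
    have hmul := ((h.pow i).mul (IsEquivalent.refl (u := v ^ (p - i)))).isLittleO
    rwa [hpow] at hmul
  have hsum : (fun x ↦ ∑ i ∈ Finset.range (p + 1), u x ^ i * v x ^ (p - i))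
      ~[l] fun x ↦ (p + 1) * v x ^ p := by
    refine ((IsLittleO.sum hterm).congr_left fun x ↦ ?_).trans_isBigO
      (isBigO_self_const_mul (by positivity) _ _)
    simp [Finset.sum_sub_distrib]
  refine (hsum.mul IsEquivalent.refl).congr_left (.of_forall fun x ↦ ?_)
  simpa using geom_sum₂_mul (u x) (v x) (p + 1)

lemma monotone_log_natCast : Monotone fun n : ℕ ↦ Real.log n := fun m n hmn ↦ by
  rcases m.eq_zero_or_pos with rfl | hm
  · simpa using Real.log_natCast_nonneg n
  · exact Real.log_le_log (Nat.cast_pos.2 hm) (Nat.cast_le.2 hmn)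

lemma tendsto_log_natCast : Tendsto (fun n : ℕ ↦ Real.log n) atTop atTop :=
  Real.tendsto_log_atTop.comp tendsto_natCast_atTop_atTop

lemma isEquivalent_log_natCast_succ :
    (fun n : ℕ ↦ Real.log (n + 1 : ℕ)) ~[atTop] fun n ↦ Real.log n := by
  refine IsEquivalent.log ?_ tendsto_natCast_atTop_atTop
  have hrefl : (fun n : ℕ ↦ (n : ℝ)) ~[atTop] fun n ↦ n := .refl
  simpa using hrefl.add_const_of_norm_tendsto_atTop (c := 1)
    (tendsto_norm_atTop_atTop.comp tendsto_natCast_atTop_atTop)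

lemma isEquivalent_log_natCast_succ_sub_log :
    (fun n : ℕ ↦ Real.log (n + 1 : ℕ) - Real.log n) ~[atTop] fun n ↦ (n : ℝ)⁻¹ := by
  refine isEquivalent_of_tendsto_one (((Real.tendsto_mul_log_one_add_div_atTop 1).comp
    tendsto_natCast_atTop_atTop).congr' ?_)
  filter_upwards [eventually_gt_atTop 0] with n hn
  have hn' : (n : ℝ) ≠ 0 := by positivity
  rw [Function.comp_apply, Pi.div_apply, div_inv_eq_mul, ← Real.log_div (by positivity) hn',
    mul_comm, Nat.cast_succ, add_div, div_self hn']

lemma isEquivalent_sum_range_log_pow_div {f : ℕ → ℝ} {c : ℝ} (hc : 0 < c) (p : ℕ)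
    (hf : f ~[atTop] fun n ↦ c * (Real.log n ^ p / n)) :
    (fun n ↦ ∑ i ∈ Finset.range n, f i) ~[atTop] fun n ↦ c / (p + 1) * Real.log n ^ (p + 1) := by
  let g (n : ℕ) : ℝ := c / (p + 1) * (Real.log (n + 1 : ℕ) ^ (p + 1) - Real.log n ^ (p + 1))
  have hsum (n : ℕ) : ∑ i ∈ Finset.range n, g i = c / (p + 1) * Real.log n ^ (p + 1) := by
    rw [← Finset.mul_sum, Finset.sum_range_sub (fun n : ℕ ↦ Real.log n ^ (p + 1))]
    simp
  have hg : 0 ≤ g := fun n ↦ by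
    have : Real.log n ^ (p + 1) ≤ Real.log (n + 1 : ℕ) ^ (p + 1) :=
      pow_le_pow_left₀ (Real.log_natCast_nonneg n) (monotone_log_natCast n.le_succ) _
    exact mul_nonneg (by positivity) (sub_nonneg.2 this)
  have hfg : f ~[atTop] g := by
    have hpow := (isEquivalent_pow_succ_sub_pow_succ isEquivalent_log_natCast_succ p).trans
      (IsEquivalent.refl.mul isEquivalent_log_natCast_succ_sub_log)
    refine hf.trans (((IsEquivalent.refl (u := fun _ ↦ c / (p + 1))).mul hpow).congr_right
      (.of_forall fun n ↦ ?_)).symm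
    simp only [Pi.mul_apply]
    field
  refine (isEquivalent_sum_range hfg hg ?_).congr_right (.of_forall hsum)
  simp_rw [hsum]
  exact ((tendsto_pow_atTop p.succ_ne_zero).comp tendsto_log_natCast).const_mul_atTop
    (by positivity)

end LogarithmicSums

section Omega

lemma omegaFn_mem_Ioo {σ : ℝ} (hσ : 0 < σ) : omegaFn σ ∈ Ioo 0 1 :=
  ⟨inv_pos.2 (by positivity), inv_lt_one_of_one_lt₀ (lt_add_of_pos_right 1 (by positivity))⟩

lemma isEquivalent_omegaFn : omegaFn ~[atTop] fun σ ↦ (σ ^ 2)⁻¹ := by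
  refine IsEquivalent.inv (isEquivalent_of_tendsto_one ?_)
  have hinv : Tendsto (fun σ : ℝ ↦ (σ ^ 2)⁻¹) atTop (𝓝 0) :=
    (tendsto_pow_atTop two_ne_zero).inv_tendsto_atTop
  have hlim : Tendsto (fun σ : ℝ ↦ (σ ^ 2)⁻¹ + 1 / 2 * (1 + √(1 + 4 * (σ ^ 2)⁻¹))) atTop (𝓝 1) := by
    have hsqrt := ((hinv.const_mul 4).const_add 1).sqrt
    convert hinv.add ((hsqrt.const_add 1).const_mul (1 / 2)) using 2
    norm_num
  refine hlim.congr' ?_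
  filter_upwards [eventually_ne_atTop 0] with σ hσ
  rw [Pi.div_apply, ← div_eq_mul_inv]
  field

variable {ω : ℕ → ℝ} {β : ℝ}

lemma isEquivalent_neg_log_of_isEquivalent_inv (hβ : 0 < β)
    (hω : ω ~[atTop] fun j ↦ (β * j)⁻¹) :
    (fun j ↦ -Real.log (ω j)) ~[atTop] fun j ↦ Real.log j := by
  have hlin : Tendsto (fun j : ℕ ↦ β * (j : ℝ)) atTop atTop :=
    tendsto_natCast_atTop_atTop.const_mul_atTop hβ
  have hinv : (fun j ↦ (ω j)⁻¹) ~[atTop] fun j ↦ β * j :=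
    hω.inv.congr_right (.of_forall fun j ↦ inv_inv _)
  have hlog : (fun j : ℕ ↦ Real.log (β * j)) ~[atTop] fun j ↦ Real.log j := by
    refine (IsEquivalent.refl.const_add_of_norm_tendsto_atTop (c := Real.log β)
      (tendsto_norm_atTop_atTop.comp tendsto_log_natCast)).congr_left ?_
    filter_upwards [eventually_ne_atTop 0] with j hj
    rw [Real.log_mul hβ.ne' (Nat.cast_ne_zero.2 hj)]
  exact ((hinv.log hlin).trans hlog).congr_left (.of_forall fun j ↦ Real.log_inv _)

lemma isEquivalent_div_one_sub_pow_mul_neg_log_pow (hβ : 0 < β)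
    (hω : ω ~[atTop] fun j ↦ (β * j)⁻¹) (q p : ℕ) :
    (fun j ↦ ω j / (1 - ω j) ^ q * (-Real.log (ω j)) ^ p) ~[atTop]
      fun j ↦ β⁻¹ * (Real.log j ^ p / j) := by
  have hlim : Tendsto ω atTop (𝓝 0) := hω.symm.tendsto_nhds
    (tendsto_natCast_atTop_atTop.const_mul_atTop hβ).inv_tendsto_atTop
  have hone : (fun j ↦ (1 - ω j) ^ q) ~[atTop] fun _ ↦ (1 : ℝ) :=
    (isEquivalent_const_iff_tendsto one_ne_zero).2 (by simpa using (hlim.const_sub 1).pow q)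
  refine ((hω.div hone).mul ((isEquivalent_neg_log_of_isEquivalent_inv hβ hω).pow p)).congr_right
    (.of_forall fun j ↦ ?_)
  simp only [Pi.mul_apply, Pi.div_apply, Pi.pow_apply]
  rw [div_one, mul_inv]
  ring

end Omega

lemma isEquivalent_omegaFn_inv_mul {σ : ℕ → ℝ} (hσ : ∀ j, 0 < σ j) {β : ℝ} (hβ : 0 < β)
    (h : Tendsto (fun j : ℕ ↦ σ j ^ 2 / (β * j)) atTop (𝓝 1)) :
    (fun j ↦ omegaFn (σ j)) ~[atTop] fun j ↦ (β * j)⁻¹ := by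
  have hsq : (fun j ↦ σ j ^ 2) ~[atTop] fun j ↦ β * j := isEquivalent_of_tendsto_one h
  have hlim : Tendsto σ atTop atTop := by
    refine (Real.tendsto_sqrt_atTop.comp (hsq.symm.tendsto_atTop
      (tendsto_natCast_atTop_atTop.const_mul_atTop hβ))).congr fun j ↦ Real.sqrt_sq (hσ j).le
  exact (isEquivalent_omegaFn.comp_tendsto hlim).trans hsq.inv

lemma tendsto_log_rpow_div_atTop {r c : ℝ} (hr : 0 < r) (hc : 0 < c) :
    Tendsto (fun d : ℕ ↦ Real.log d ^ r / c) atTop atTop :=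
  ((tendsto_rpow_atTop hr).comp tendsto_log_natCast).atTop_div_const hc

lemma tendsto_div_sq_of_isEquivalent_log_pow_three {f : ℕ → ℝ} {β : ℝ} (hβ : 0 < β)
    (hf : f ~[atTop] fun d ↦ β⁻¹ / 3 * Real.log d ^ 3) :
    Tendsto (fun d ↦ f d / (Real.log d ^ (3 / 2 : ℝ) / √(3 * β)) ^ 2) atTop (𝓝 1) := by
  have hb (d : ℕ) : (Real.log d ^ (3 / 2 : ℝ) / √(3 * β)) ^ 2 = β⁻¹ / 3 * Real.log d ^ 3 := by
    rw [div_pow, Real.sq_sqrt (by positivity), ← Real.rpow_mul_natCast (Real.log_natCast_nonneg d)]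
    norm_num
    field
  simp_rw [hb]
  refine (isEquivalent_iff_tendsto_one ?_).1 hf
  filter_upwards [tendsto_log_natCast.eventually_ne_atTop 0] with d hd
  positivity

lemma isLittleO_pow_rpow_atTop {n : ℕ} {r : ℝ} (hnr : n < r) :
    (fun x : ℝ ↦ x ^ n) =o[atTop] fun x ↦ x ^ r := by
  refine isLittleO_of_tendsto' ?_ ((tendsto_rpow_neg_atTop (sub_pos.2 hnr)).congr' ?_) <;>
    filter_upwards [eventually_gt_atTop 0] with x hx
  · exact fun h ↦ absurd h (Real.rpow_pos_of_pos hx r).ne'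
  · rw [neg_sub, Real.rpow_sub hx, Real.rpow_natCast]

lemma tendsto_div_log_rpow_div_pow {f : ℕ → ℝ} {r : ℝ} {n m : ℕ} (hnm : n < r * m)
    (hf : f =O[atTop] fun d ↦ Real.log d ^ n) (c : ℝ) :
    Tendsto (fun d : ℕ ↦ f d / (Real.log d ^ r / c) ^ m) atTop (𝓝 0) := by
  have hlim := (hf.trans_isLittleO
    ((isLittleO_pow_rpow_atTop hnm).comp_tendsto tendsto_log_natCast)).tendsto_div_nhds_zero
  refine ((zero_mul (c ^ m)) ▸ hlim.mul_const (c ^ m)).congr fun d ↦ ?_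
  rw [Function.comp_apply, Real.rpow_mul_natCast (Real.log_natCast_nonneg d), div_pow,
    div_div_eq_mul_div, div_mul_eq_mul_div]

theorem tendsto_log_avgComplexity {ω : ℕ → unitInterval} (hω₀ : ∀ j, ω j ≠ 0) (hω₁ : ∀ j, ω j ≠ 1)
    {b : ℕ → ℝ} (hb : Tendsto b atTop atTop)
    (hvar : Tendsto (fun d ↦ (∑ j ∈ Finset.range d,
      (ω j : ℝ) / (1 - ω j) ^ 2 * (-Real.log (ω j)) ^ 2) / b d ^ 2) atTop (𝓝 1))
    (hthird : Tendsto (fun d ↦ (∑ j ∈ Finset.range d,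
      (ω j : ℝ) / (1 - ω j) ^ 3 * (-Real.log (ω j)) ^ 3) / b d ^ 3) atTop (𝓝 0))
    {ε : ℝ} (hε : ε ∈ Ioo 0 1) :
    Tendsto (fun d ↦ (Real.log (avgComplexity (fun j ↦ ω j) d ε) - aSeq (fun j ↦ ω j) d) / b d)
      atTop (𝓝 (stdGaussianQuantile (1 - ε ^ 2))) := by
  have hε₁ : ε ^ 2 < 1 := pow_lt_one₀ hε.1.le hε.2 two_ne_zero
  simp_rw [avgComplexity_eq_coveringCard hω₁ _ hε₁, aSeq_eq_sum_geometricEntropy]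
  simp_rw [Finset.sum_range] at hvar hthird
  exact tendsto_log_coveringCard_geometricProduct (fun d (j : Fin d) ↦ hω₀ j) (fun d j ↦ hω₁ j) hb
    hvar hthird (sub_pos.2 hε₁) (sub_lt_self 1 (pow_pos hε.1 2))

/-- If `σ_j² ~ β j`, then `ln n_d(ε) = a_d + Φ⁻¹(1-ε²) b_d + o(b_d)`
with `b_d = (ln d)^{3/2}/√(3β)`. -/
theorem logAsymptotics_linear_scale (σseq : ℕ → ℝ) (hpos : ∀ j, 0 < σseq j)
    (β : ℝ) (hβ : 0 < β)
    (hasymp : Tendsto (fun j : ℕ => (σseq j) ^ 2 / (β * (j : ℝ))) atTop (nhds 1)) :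
    ∀ ε ∈ Set.Ioo (0 : ℝ) 1,
      Tendsto (fun d : ℕ =>
          (Real.log (avgComplexity (fun j => omegaFn (σseq j)) d ε)
              - aSeq (fun j => omegaFn (σseq j)) d)
            / (Real.log d ^ ((3 : ℝ) / 2) / Real.sqrt (3 * β)))
        atTop (nhds (stdGaussianQuantile (1 - ε ^ 2))) := by
  intro ε hε
  have hmem (j : ℕ) : omegaFn (σseq j) ∈ Ioo 0 1 := omegaFn_mem_Ioo (hpos j)
  let ω (j : ℕ) : unitInterval := ⟨omegaFn (σseq j), Ioo_subset_Icc_self (hmem j)⟩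
  have hω : (fun j ↦ (ω j : ℝ)) ~[atTop] fun j ↦ (β * j)⁻¹ :=
    isEquivalent_omegaFn_inv_mul hpos hβ hasymp
  have hsum (p : ℕ) : (fun d ↦ ∑ j ∈ Finset.range d,
      (ω j : ℝ) / (1 - ω j) ^ p * (-Real.log (ω j)) ^ p)
        ~[atTop] fun d ↦ β⁻¹ / (p + 1) * Real.log d ^ (p + 1) :=
    isEquivalent_sum_range_log_pow_div (inv_pos.2 hβ) p
      (isEquivalent_div_one_sub_pow_mul_neg_log_pow hβ hω p p)
  refine tendsto_log_avgComplexity (ω := ω) (fun j ↦ unitInterval.pos_iff_ne_zero.1 (hmem j).1)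
    (fun j ↦ unitInterval.lt_one_iff_ne_one.1 (hmem j).2)
    (tendsto_log_rpow_div_atTop (by norm_num) (by positivity))
    (tendsto_div_sq_of_isEquivalent_log_pow_three hβ ?_)
    (tendsto_div_log_rpow_div_pow (by norm_num)
      ((hsum 3).trans_isBigO (isBigO_const_mul_self _ _ _)) _) hε
  convert hsum 2 using 3
  norm_num
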